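/- If (T,f) is a Hubbard tree with *-periodic or preperiodic kneading sequence ν, then ν determines (T,f) uniquely up to equivalence: any two Hubbard trees with the same kneading sequence ν are equivalent. -/

import Mathlib

/- Common definitions for formalizing "Admissibility of kneading sequences and
structure of Hubbard trees for quadratic polynomials" by Bruin–Schleicher. -/

namespace HubbardTrees

/-- The symbols `0`, `1`, `*` used for itineraries and kneading sequences. -/
inductive Sym : Type
  | zero : Sym
  | one : Sym
  | star : Sym
deriving DecidableEq

/-- `A` is an arc in `X` joining `x` and `y` (a point if `x = y`, otherwise a
homeomorphic image of `[0,1]` with endpoints `x` and `y`). -/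
def IsArcBetween {X : Type*} [TopologicalSpace X] (A : Set X) (x y : X) : Prop :=
  (x = y ∧ A = {x}) ∨
  (x ≠ y ∧ ∃ γ : Path x y, Topology.IsEmbedding ⇑γ ∧ Set.range ⇑γ = A)

/-- The global arms at `x`: the connected components of `X \ {x}`. -/
def arms {X : Type*} [TopologicalSpace X] (x : X) : Set (Set X) :=
  {C | ∃ y, y ≠ x ∧ C = connectedComponentIn {x}ᶜ y}

/-- The global arm at `x` containing `y` (for `y ≠ x`): the component of `X \ {x}`
containing `y`.  Local arms at `x` being germs of global arms, we represent the local
arm at `x` pointing towards `y` by this set. -/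
def armTo {X : Type*} [TopologicalSpace X] (x y : X) : Set X :=
  connectedComponentIn {x}ᶜ y

/-- `x` is an endpoint: it has exactly one arm. -/
def IsEndpoint {X : Type*} [TopologicalSpace X] (x : X) : Prop :=
  (arms x).ncard = 1

/-- `x` is a branch point: it has at least three arms. -/
def IsBranchPt {X : Type*} [TopologicalSpace X] (x : X) : Prop :=
  3 ≤ (arms x).ncard

/-- `f` maps the set `A` homeomorphically onto its image. -/
def MapsHomeoOn {X : Type*} [TopologicalSpace X] (f : X → X) (A : Set X) : Prop :=
  Topology.IsEmbedding (A.restrict f)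

/-- `f` is a local homeomorphism onto its image at `x`. -/
def IsLocalHomeoAt {X : Type*} [TopologicalSpace X] (f : X → X) (x : X) : Prop :=
  ∃ U : Set X, IsOpen U ∧ x ∈ U ∧ Topology.IsEmbedding (U.restrict f)

/-- `g` sends the local arm at `x` represented by the global arm `C` to the local
arm at `g x` represented by `C'` (germ condition: some initial piece of `C` at `x`
is mapped into `C'`). -/
def MapsLocalArm {X : Type*} [TopologicalSpace X] (g : X → X) (x : X) (C C' : Set X) : Prop :=
  C ∈ arms x ∧ C' ∈ arms (g x) ∧ ∃ U ∈ nhds x, g '' (C ∩ U) ⊆ C'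

/-- `z` is periodic under `f` with exact period `n`. -/
def ExactPeriod {Y : Type*} (f : Y → Y) (z : Y) (n : ℕ) : Prop :=
  1 ≤ n ∧ f^[n] z = z ∧ ∀ k, 1 ≤ k → k < n → f^[k] z ≠ z

/-- The first return map `f^[n]` of the fixed point `z` of `f^[n]` permutes all the
local arms at `z` transitively in a single cycle. -/
def ArmsTransitive {X : Type*} [TopologicalSpace X] (f : X → X) (n : ℕ) (z : X) : Prop :=
  ∀ C ∈ arms z, ∀ C' ∈ arms z, ∃ j : ℕ, MapsLocalArm (f^[n * j]) z C C'

/-- An (abstract) Hubbard tree: a finite topological tree `X` together with a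
continuous surjection `f` and a critical point `c0`, subject to the axioms of
Bruin–Schleicher. -/
structure HubbardTree (X : Type*) [TopologicalSpace X] : Type _ where
  /-- the dynamics -/
  f : X → X
  /-- the critical point -/
  c0 : X
  compact : CompactSpace X
  t2 : T2Space X
  conn : ConnectedSpace X
  /-- the unique arc `[x,y]` joining two points -/
  arc : X → X → Set X
  arc_isArc : ∀ x y : X, IsArcBetween (arc x y) x y
  arc_unique : ∀ (x y : X) (A : Set X), IsArcBetween A x y → A = arc x y
  -- finiteness of the tree
  arms_finite : ∀ x : X, (arms x).Finite
  branch_finite : Set.Finite {x : X | IsBranchPt x}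
  endpoint_finite : Set.Finite {x : X | IsEndpoint x}
  cont : Continuous f
  surj : Function.Surjective f
  /-- every point has at most two inverse images -/
  two_preimages : ∀ y : X, ∃ a b : X, f ⁻¹' {y} ⊆ {a, b}
  /-- local homeomorphism onto its image away from the critical point -/
  local_homeo : ∀ x : X, x ≠ c0 → IsLocalHomeoAt f x
  /-- all endpoints lie on the critical orbit -/
  endpoints_on_orbit : ∀ x : X, IsEndpoint x → ∃ k : ℕ, f^[k] c0 = x
  /-- the critical point is periodic or preperiodic -/
  crit_preperiodic : ∃ k n : ℕ, 1 ≤ n ∧ f^[k + n] c0 = f^[k] c0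
  /-- the critical point is not fixed -/
  crit_not_fixed : f c0 ≠ c0
  /-- expansivity -/
  expansive : ∀ x y : X, x ≠ y →
    (IsBranchPt x ∨ ∃ k : ℕ, f^[k] c0 = x) →
    (IsBranchPt y ∨ ∃ k : ℕ, f^[k] c0 = y) →
    ∃ n : ℕ, c0 ∈ f^[n] '' (arc x y)

namespace HubbardTree

variable {X : Type*} [TopologicalSpace X] (H : HubbardTree X)

/-- The critical value `c₁ = f(c₀)`. -/
def c1 : X := H.f H.c0

/-- The component `T₁` of `T \ {c₀}` containing the critical value. -/
def T1 : Set X := connectedComponentIn {H.c0}ᶜ H.c1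

open Classical in
/-- The symbol (`0`, `1` or `*`) attached to a point of the tree. -/
noncomputable def symOf (x : X) : Sym :=
  if x = H.c0 then Sym.star else if x ∈ H.T1 then Sym.one else Sym.zero

/-- The itinerary of `x`: a sequence of symbols, 1-indexed (the value at index `0`
is irrelevant); entry `k ≥ 1` is the symbol of `f^[k-1] x`. -/
noncomputable def itin (x : X) : ℕ → Sym :=
  fun k => H.symOf (H.f^[k - 1] x)

/-- The kneading sequence: the itinerary of the critical value (1-indexed). -/
noncomputable def kneading : ℕ → Sym := H.itin H.c1

/-- `z` is the characteristic point of its periodic orbit: `c₁` lies in one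
component of `X \ {z}` while `c₀` and all other points of the orbit lie in a
different component. -/
def IsCharacteristic (z : X) : Prop :=
  ∃ Cv Cz : Set X, Cv ∈ arms z ∧ Cz ∈ arms z ∧ Cv ≠ Cz ∧
    H.c1 ∈ Cv ∧ H.c0 ∈ Cz ∧ ∀ k : ℕ, H.f^[k] z ≠ z → H.f^[k] z ∈ Cz

/-- The first return map fixes the local arm at `z` pointing to the critical point
and permutes all other local arms transitively in a single cycle. -/
def OtherArmsTransitive (n : ℕ) (z : X) : Prop :=
  ∀ C ∈ arms z, C ≠ armTo z H.c0 → ∀ C' ∈ arms z, C' ≠ armTo z H.c0 →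
    ∃ j : ℕ, MapsLocalArm (H.f^[n * j]) z C C'

/-- `z` is the characteristic point of an evil periodic orbit of branch points of
exact period `n`. -/
def IsEvilOrbit (z : X) (n : ℕ) : Prop :=
  ExactPeriod H.f z n ∧ (∀ k : ℕ, IsBranchPt (H.f^[k] z)) ∧
    H.IsCharacteristic z ∧ ¬ ArmsTransitive H.f n z

/-- `x` is precritical with `Step(x) = k`: `k ≥ 1` is minimal with `f^[k] x = c₁`. -/
def Step (x : X) (k : ℕ) : Prop :=
  1 ≤ k ∧ H.f^[k] x = H.c1 ∧ ∀ j, 1 ≤ j → j < k → H.f^[j] x ≠ H.c1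

/-- `x` is the closest precritical point `ζ_k`. -/
def IsClosestPrecritical (x : X) (k : ℕ) : Prop :=
  H.Step x k ∧ ∀ j, 1 ≤ j → j < k → H.c1 ∉ H.f^[j] '' (H.arc H.c1 x)

/-- `x` is the earliest precritical point on the set `A`, with `Step(x) = k`:
it is a precritical point on `A` of minimal Step. -/
def IsEarliestPrecriticalOn (A : Set X) (x : X) (k : ℕ) : Prop :=
  x ∈ A ∧ H.Step x k ∧ ∀ y ∈ A, ∀ j : ℕ, H.Step y j → k ≤ j

/-- Marked points: branch points and points of the critical orbit. -/
def MarkedPt (x : X) : Prop :=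
  IsBranchPt x ∨ ∃ k : ℕ, H.f^[k] H.c0 = x

/-- Two marked points are joined by an edge if the arc between them contains no
further marked point. -/
def IsEdge (x y : X) : Prop :=
  H.MarkedPt x ∧ H.MarkedPt y ∧ x ≠ y ∧
    ∀ w ∈ H.arc x y, H.MarkedPt w → w = x ∨ w = y

/-- Equivalence of Hubbard trees: a bijection between the marked points which
conjugates the dynamics and preserves edges. -/
def Equivalent {Y : Type*} [TopologicalSpace Y] (H' : HubbardTree Y) : Prop :=
  ∃ φ : X → Y,
    (∀ x : X, H.MarkedPt x → H'.MarkedPt (φ x)) ∧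
    (∀ x x' : X, H.MarkedPt x → H.MarkedPt x' → φ x = φ x' → x = x') ∧
    (∀ y : Y, H'.MarkedPt y → ∃ x : X, H.MarkedPt x ∧ φ x = y) ∧
    φ H.c0 = H'.c0 ∧
    (∀ x : X, H.MarkedPt x → φ (H.f x) = H'.f (φ x)) ∧
    (∀ x x' : X, H.MarkedPt x → H.MarkedPt x' →
      (H.IsEdge x x' ↔ H'.IsEdge (φ x) (φ x')))

end HubbardTree

/-! ### Combinatorics of kneading sequences -/

/-- The function `ρ_ν(n) = inf { k > n : ν_k ≠ ν_{k-n} } ∈ ℕ ∪ {∞}` (sequences are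
1-indexed). -/
noncomputable def rho (ν : ℕ → Sym) (n : ℕ) : ℕ∞ :=
  sInf {e : ℕ∞ | ∃ j : ℕ, e = (j : ℕ∞) ∧ n < j ∧ ν j ≠ ν (j - n)}

/-- `RhoOrbit ν k m` means that `m` belongs to the `ρ`-orbit
`k → ρ(k) → ρ(ρ(k)) → ⋯` of `k` (stopped before reaching `∞`). -/
inductive RhoOrbit (ν : ℕ → Sym) : ℕ → ℕ → Prop
  | refl (k : ℕ) : RhoOrbit ν k k
  | step {k m j : ℕ} : RhoOrbit ν k m → rho ν m = (j : ℕ∞) → RhoOrbit ν k j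

/-- `m` occurs in the internal address `1 → ρ(1) → ρ(ρ(1)) → ⋯` of `ν`. -/
def InternalAddress (ν : ℕ → Sym) (m : ℕ) : Prop := RhoOrbit ν 1 m

/-- `ν` is a `*`-periodic kneading sequence of (exact) period `n`:
`ν = overline(1 ν₂ … ν_{n-1} *)`. -/
def StarPeriodic (ν : ℕ → Sym) (n : ℕ) : Prop :=
  2 ≤ n ∧ ν 1 = Sym.one ∧ ν n = Sym.star ∧
    (∀ k, 1 ≤ k → ν (k + n) = ν k) ∧
    (∀ k, 1 ≤ k → k < n → ν k ≠ Sym.star)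

/-- `ν` fails the admissibility condition for period `m`. -/
def FailsAdmissibility (ν : ℕ → Sym) (m : ℕ) : Prop :=
  1 ≤ m ∧
  ¬ InternalAddress ν m ∧
  (∀ k : ℕ, k ∣ m → 1 ≤ k → k < m → rho ν k ≤ (m : ℕ∞)) ∧
  ∃ R r : ℕ, rho ν m = (R : ℕ∞) ∧ 1 ≤ r ∧ r ≤ m ∧ r ≡ R [MOD m] ∧ RhoOrbit ν r m

open Classical in
/-- The number `q(m)` of arms predicted by the kneading sequence, where
`ρ(m) = R < ∞` and `r ∈ {1,…,m}` is congruent to `R` modulo `m`. -/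
noncomputable def qArms (ν : ℕ → Sym) (m R r : ℕ) : ℕ :=
  if RhoOrbit ν r m then (R - r) / m + 1 else (R - r) / m + 2


/-! ### Embeddings into the plane and cyclic order of arms -/

/-- Three points in the plane are in (strictly) counterclockwise position. -/
def Ccw (p q r : ℝ × ℝ) : Prop :=
  0 < (q.1 - p.1) * (r.2 - p.2) - (q.2 - p.2) * (r.1 - p.1)

namespace HubbardTree

variable {X : Type*} [TopologicalSpace X] (H : HubbardTree X)

/-- Under an embedding `φ` of the tree into the plane, `p` is a first exit point of
the arm `C` at `x` through the circle of radius `ε` around `φ x`: `p = φ y` for a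
point `y ∈ C` at distance exactly `ε`, such that the arc from `x` to `y` stays
within distance `< ε` before reaching `y`. -/
def ExitPt (φ : X → ℝ × ℝ) (x : X) (C : Set X) (ε : ℝ) (p : ℝ × ℝ) : Prop :=
  ∃ y ∈ C, φ y = p ∧ dist (φ x) p = ε ∧
    ∀ z ∈ H.arc x y, z ≠ y → dist (φ x) (φ z) < ε

/-- The local arms at `x` represented by the arms `C, C', C''` are in
counterclockwise cyclic order under the embedding `φ`. -/
def ArmsCcw (φ : X → ℝ × ℝ) (x : X) (C C' C'' : Set X) : Prop :=
  ∃ ε₀ : ℝ, 0 < ε₀ ∧ ∀ ε : ℝ, 0 < ε → ε < ε₀ →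
    ∀ p p' p'' : ℝ × ℝ, H.ExitPt φ x C ε p → H.ExitPt φ x C' ε p' →
      H.ExitPt φ x C'' ε p'' → Ccw p p' p''

/-- `f` respects the cyclic order (induced by the embedding `φ`) of the local arms
at all branch points. -/
def RespectsCyclicOrder (φ : X → ℝ × ℝ) : Prop :=
  ∀ x : X, IsBranchPt x →
    ∀ C C' C'' : Set X, C ∈ arms x → C' ∈ arms x → C'' ∈ arms x →
      C ≠ C' → C' ≠ C'' → C ≠ C'' → H.ArmsCcw φ x C C' C'' →
      ∀ D D' D'' : Set X, MapsLocalArm H.f x C D → MapsLocalArm H.f x C' D' →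
        MapsLocalArm H.f x C'' D'' → H.ArmsCcw φ (H.f x) D D' D''

/-- The Hubbard tree can be topologically embedded into the plane `ℝ²` so that `f`
respects the cyclic order of the local arms at all branch points. -/
def PlanarEmbeddable : Prop :=
  ∃ φ : X → ℝ × ℝ, Topology.IsEmbedding φ ∧ H.RespectsCyclicOrder φ

end HubbardTree


section Helpers

open Set

variable {X : Type*} [TopologicalSpace X]

theorem cc_self (a : X) : connectedComponentIn ({a}ᶜ : Set X) a = ∅ :=
  connectedComponentIn_eq_empty (by simp)

theorem mem_cc {a r : X} (h : r ≠ a) : r ∈ connectedComponentIn ({a}ᶜ : Set X) r :=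
  mem_connectedComponentIn (by simpa using h)

theorem notMem_cc (a r : X) : a ∉ connectedComponentIn ({a}ᶜ : Set X) r := fun h =>
  (connectedComponentIn_subset _ _ h) rfl

theorem ne_of_mem_cc {a r z : X} (h : z ∈ connectedComponentIn ({a}ᶜ : Set X) r) : r ≠ a := by
  rintro rfl
  rw [cc_self] at h
  exact h

theorem cc_eq {a r z : X} (h : z ∈ connectedComponentIn ({a}ᶜ : Set X) r) :
    connectedComponentIn ({a}ᶜ : Set X) r = connectedComponentIn ({a}ᶜ : Set X) z :=
  connectedComponentIn_eq h

theorem sub_cc {a r : X} {S : Set X} (hS : IsPreconnected S) (hr : r ∈ S) (ha : a ∉ S) :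
    S ⊆ connectedComponentIn ({a}ᶜ : Set X) r :=
  hS.subset_connectedComponentIn hr (by
    intro z hz hza
    exact ha (by rw [mem_singleton_iff] at hza; rwa [← hza]))

theorem closure_cc_subset (a r : X) :
    closure (connectedComponentIn ({a}ᶜ : Set X) r) ⊆
      insert a (connectedComponentIn ({a}ᶜ : Set X) r) := by
  intro z hz
  by_cases hza : z = a
  · exact Or.inl hza
  right
  by_cases hra : r = a
  · subst hra
    rw [cc_self] at hz
    simp at hz
  have hpre : IsPreconnected (connectedComponentIn ({a}ᶜ : Set X) r) :=
    isPreconnected_connectedComponentIn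
  have h2 : IsPreconnected (insert z (connectedComponentIn ({a}ᶜ : Set X) r)) :=
    hpre.subset_closure (subset_insert _ _)
      (insert_subset hz subset_closure)
  refine sub_cc h2 (Or.inr (mem_cc hra)) ?_ (Or.inl rfl)
  rintro (h | h)
  · exact hza h.symm
  · exact notMem_cc _ _ h

theorem isOpen_cc [T2Space X] (hfin : ∀ x : X, (arms x).Finite) (a r : X) :
    IsOpen (connectedComponentIn ({a}ᶜ : Set X) r) := by
  by_cases hra : r = a
  · subst hra
    rw [cc_self]
    exact isOpen_empty
  have hc : IsClosed (⋃ C ∈ arms a \ {connectedComponentIn ({a}ᶜ : Set X) r}, closure C) :=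
    ((hfin a).subset sdiff_subset).isClosed_biUnion (fun _ _ => isClosed_closure)
  have : connectedComponentIn ({a}ᶜ : Set X) r =
      ({a}ᶜ : Set X) ∩
        (⋃ C ∈ arms a \ {connectedComponentIn ({a}ᶜ : Set X) r}, closure C)ᶜ := by
    ext z
    constructor
    · intro hz
      refine ⟨connectedComponentIn_subset _ _ hz, ?_⟩
      intro h
      simp only [mem_iUnion] at h
      obtain ⟨C, ⟨⟨y, hy, rfl⟩, hne⟩, hzC⟩ := h
      rcases closure_cc_subset a y hzC with h | h
      · subst h
        exact notMem_cc _ _ hz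
      · exact hne (by rw [mem_singleton_iff, cc_eq h, cc_eq hz])
    · rintro ⟨hza, hz⟩
      by_contra hcon
      have hza' : z ≠ a := hza
      apply hz
      simp only [mem_iUnion]
      refine ⟨_, ⟨⟨z, hza', rfl⟩, ?_⟩, subset_closure (mem_cc hza')⟩
      intro h
      rw [mem_singleton_iff] at h
      exact hcon (h ▸ mem_cc hza')
  rw [this]
  exact isOpen_compl_singleton.inter hc.isOpen_compl

theorem mem_closure_cc [T2Space X] [ConnectedSpace X] (hfin : ∀ x : X, (arms x).Finite)
    {a r : X} (h : r ≠ a) : a ∈ closure (connectedComponentIn ({a}ᶜ : Set X) r) := by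
  by_contra hcon
  have hcl : IsClosed (connectedComponentIn ({a}ᶜ : Set X) r) := by
    rw [← closure_subset_iff_isClosed]
    intro z hz
    rcases closure_cc_subset a r hz with h | h
    · subst h
      exact absurd hz hcon
    · exact h
  have := (isClopen_iff.1 ⟨hcl, isOpen_cc hfin a r⟩)
  rcases this with h' | h'
  · exact absurd (mem_cc h) (by rw [h']; simp)
  · exact notMem_cc a r (by rw [h']; trivial)

theorem preconn_insert [T2Space X] [ConnectedSpace X] (hfin : ∀ x : X, (arms x).Finite)
    {a r : X} (h : r ≠ a) :
    IsPreconnected (insert a (connectedComponentIn ({a}ᶜ : Set X) r)) :=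
  isPreconnected_connectedComponentIn.subset_closure (subset_insert _ _)
      (insert_subset (mem_closure_cc hfin h) subset_closure)

/-- transitivity of the rooted order -/
theorem ord_trans [T2Space X] [ConnectedSpace X] (hfin : ∀ x : X, (arms x).Finite)
    {r a b c : X} (hab : b ∉ connectedComponentIn ({a}ᶜ : Set X) r)
    (hbc : c ∉ connectedComponentIn ({b}ᶜ : Set X) r) :
    c ∉ connectedComponentIn ({a}ᶜ : Set X) r := by
  intro hc
  have hra : r ≠ a := ne_of_mem_cc hc
  by_cases hba : b = a
  · subst hba; exact hbc hc
  refine hbc (sub_cc (preconn_insert hfin hra) (Or.inr (mem_cc hra)) ?_ (Or.inr hc))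
  rintro (h | h)
  · exact hba h
  · exact hab h

theorem ord_antisymm [T2Space X] [ConnectedSpace X] (hfin : ∀ x : X, (arms x).Finite)
    {r a b : X} (hab : b ∉ connectedComponentIn ({a}ᶜ : Set X) r)
    (hba : a ∉ connectedComponentIn ({b}ᶜ : Set X) r) : b = a := by
  by_contra hne
  by_cases hra : r = a
  · subst hra
    exact hba (mem_cc (fun h => hne h.symm))
  refine hba (sub_cc (preconn_insert hfin hra) (Or.inr (mem_cc hra)) ?_ (Or.inl rfl))
  rintro (h | h)
  · exact hne h
  · exact hab h

theorem exists_max [T2Space X] [ConnectedSpace X]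
    (hfin : ∀ x : X, (arms x).Finite) (r : X) {K : Set X} (hK : IsCompact K)
    (hne : K.Nonempty) :
    ∃ q ∈ K, ∀ b ∈ K, b ∉ connectedComponentIn ({q}ᶜ : Set X) r → b = q := by
  let R : K → K → Prop := fun a b => (b : X) ∉ connectedComponentIn ({(a : X)}ᶜ : Set X) r
  have hrefl : ∀ a : K, R a a := fun a => notMem_cc _ _
  have key : ∃ m : K, ∀ a, R m a → R a m := by
    apply exists_maximal_of_chains_bounded
    · intro c hc
      by_cases hcn : c.Nonempty
      · have hcn' : Nonempty c := hcn.to_subtype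
        let Z : c → Set X := fun a => K ∩ (connectedComponentIn ({(a.1 : X)}ᶜ : Set X) r)ᶜ
        have hcl : ∀ a : c, IsClosed (Z a) := fun a =>
          hK.isClosed.inter (isOpen_cc hfin _ _).isClosed_compl
        have hdir : Directed (· ⊇ ·) Z := by
          intro a b
          rcases eq_or_ne a.1 b.1 with hab | hab
          · exact ⟨a, subset_rfl, by rw [show Z b = Z a by simp only [Z, hab]]⟩
          · rcases hc a.2 b.2 hab with h | h
            · exact ⟨b, fun z hz => ⟨hz.1, ord_trans hfin h hz.2⟩, subset_rfl⟩
            · exact ⟨a, subset_rfl, fun z hz => ⟨hz.1, ord_trans hfin h hz.2⟩⟩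
        obtain ⟨z, hz⟩ := IsCompact.nonempty_iInter_of_directed_nonempty_isCompact_isClosed Z hdir
          (fun a => ⟨a.1, a.1.2, notMem_cc _ _⟩)
          (fun a => hK.inter_right (isOpen_cc hfin _ _).isClosed_compl) hcl
        rw [mem_iInter] at hz
        exact ⟨⟨z, (hz hcn'.some).1⟩, fun a ha => (hz ⟨a, ha⟩).2⟩
      · obtain ⟨k, hk⟩ := hne
        exact ⟨⟨k, hk⟩, fun a ha => absurd ⟨a, ha⟩ hcn⟩
    · intro a b c hab hbc
      exact ord_trans hfin hab hbc
  obtain ⟨m, hm⟩ := key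
  exact ⟨m, m.2, fun b hb hbm => ord_antisymm hfin hbm (hm ⟨b, hb⟩ hbm)⟩

/-- every arm contains an endpoint -/
theorem arm_has_endpoint [T2Space X] [ConnectedSpace X] [CompactSpace X]
    (hfin : ∀ x : X, (arms x).Finite) {a r : X} (h : r ≠ a) :
    ∃ e ∈ connectedComponentIn ({a}ᶜ : Set X) r, IsEndpoint e := by
  have hKc : IsClosed (insert a (connectedComponentIn ({a}ᶜ : Set X) r)) := by
    rw [← closure_subset_iff_isClosed, insert_eq, closure_union, closure_singleton]
    exact union_subset subset_union_left (closure_cc_subset a r)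
  obtain ⟨q, hqK, hq⟩ := exists_max hfin a hKc.isCompact ⟨a, Or.inl rfl⟩
  have hqa : q ≠ a := by
    rintro rfl
    have := hq r (Or.inr (mem_cc h)) (by rw [cc_self]; simp)
    exact h this
  have hqD : q ∈ connectedComponentIn ({a}ᶜ : Set X) r := by
    rcases hqK with h' | h'
    · exact absurd h' hqa
    · exact h'
  refine ⟨q, hqD, ?_⟩
  have : arms q = {connectedComponentIn ({q}ᶜ : Set X) a} := by
    ext E
    constructor
    · rintro ⟨y, hy, rfl⟩
      rw [mem_singleton_iff]
      by_contra hne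
      have hya : a ∉ connectedComponentIn ({q}ᶜ : Set X) y := fun h' => hne (cc_eq h')
      have hsub : insert q (connectedComponentIn ({q}ᶜ : Set X) y) ⊆
          connectedComponentIn ({a}ᶜ : Set X) q := by
        refine sub_cc (preconn_insert hfin hy) (Or.inl rfl) ?_
        rintro (h' | h')
        · exact hqa h'.symm
        · exact hya h'
      have hyD : y ∈ connectedComponentIn ({a}ᶜ : Set X) r := by
        rw [cc_eq hqD]
        exact hsub (Or.inr (mem_cc hy))
      exact hy (hq y (Or.inr hyD) (fun h' => hne (cc_eq h').symm))
    · rintro rfl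
      exact ⟨a, hqa.symm, rfl⟩
  rw [IsEndpoint, this, ncard_singleton]

end Helpers
section Helpers2

open Set

namespace HubbardTree

variable {X : Type*} [TopologicalSpace X] (H : HubbardTree X)

theorem arc_self (x : X) : H.arc x x = {x} := by
  rcases H.arc_isArc x x with ⟨_, h⟩ | ⟨h, _⟩
  · exact h
  · exact absurd rfl h

theorem arc_of_param {γ : ℝ → X} {a b : ℝ} (hab : a ≤ b) (hc : Continuous γ)
    (hi : InjOn γ (Icc a b)) : γ '' Icc a b = H.arc (γ a) (γ b) := by
  have := H.t2
  rcases eq_or_lt_of_le hab with rfl | hlt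
  · rw [arc_self]; simp
  apply H.arc_unique
  right
  refine ⟨fun h => hlt.ne (hi (left_mem_Icc.2 hab) (right_mem_Icc.2 hab) h), ?_⟩
  have hmem : ∀ t : unitInterval, a + t * (b - a) ∈ Icc a b := by
    intro t
    have h0 := t.2.1
    have h1 := t.2.2
    constructor <;> nlinarith
  let p : Path (γ a) (γ b) :=
    { toFun := fun t => γ (a + t * (b - a))
      continuous_toFun := by fun_prop
      source' := by simp
      target' := by simp }
  refine ⟨p, ?_, ?_⟩
  · refine (Continuous.isClosedEmbedding p.continuous ?_).isEmbedding
    intro s t hst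
    have := hi (hmem s) (hmem t) hst
    have h2 : (s : ℝ) * (b - a) = t * (b - a) := by linarith
    exact Subtype.ext (mul_right_cancel₀ (by linarith) h2)
  · ext z
    constructor
    · rintro ⟨t, rfl⟩
      exact ⟨_, hmem t, rfl⟩
    · rintro ⟨t, ht, rfl⟩
      have hpos : 0 < b - a := by linarith
      refine ⟨⟨(t - a) / (b - a), div_nonneg (by linarith [ht.1]) hpos.le, ?_⟩, ?_⟩
      · rw [div_le_one hpos]; linarith [ht.2]
      · show γ (a + (t - a) / (b - a) * (b - a)) = γ t
        congr 1
        field_simp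
        ring

theorem exists_param {x y : X} (hxy : x ≠ y) : ∃ γ : ℝ → X, Continuous γ ∧
    InjOn γ (Icc 0 1) ∧ γ 0 = x ∧ γ 1 = y ∧ γ '' Icc 0 1 = H.arc x y := by
  rcases H.arc_isArc x y with ⟨h, _⟩ | ⟨_, p, hp, hr⟩
  · exact absurd h hxy
  refine ⟨p.extend, p.continuous_extend, ?_, by simp, by simp, ?_⟩
  · intro s hs t ht hst
    rw [p.extend_apply hs, p.extend_apply ht] at hst
    exact congrArg Subtype.val (hp.injective hst)
  · rw [← hr]
    ext z
    constructor
    · rintro ⟨t, ht, rfl⟩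
      exact ⟨⟨t, ht⟩, (p.extend_apply ht).symm⟩
    · rintro ⟨t, rfl⟩
      exact ⟨t, t.2, p.extend_apply t.2⟩

theorem arc_comm (x y : X) : H.arc x y = H.arc y x := by
  by_cases hxy : x = y
  · rw [hxy]
  obtain ⟨γ, hc, hi, h0, h1, him⟩ := H.exists_param hxy
  have := H.arc_of_param (γ := fun t => γ (1 - t)) zero_le_one (by fun_prop) (by
    intro s hs t ht hst
    have := hi (x₁ := 1 - s) (x₂ := 1 - t) ⟨by linarith [hs.2], by linarith [hs.1]⟩
      ⟨by linarith [ht.2], by linarith [ht.1]⟩ hst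
    linarith)
  simp only [sub_zero, sub_self, h0, h1] at this
  rw [← this, ← him]
  ext z
  constructor
  · rintro ⟨t, ht, rfl⟩
    exact ⟨1 - t, ⟨by linarith [ht.2], by linarith [ht.1]⟩, by simp⟩
  · rintro ⟨t, ht, rfl⟩
    exact ⟨1 - t, ⟨by linarith [ht.2], by linarith [ht.1]⟩, by simp⟩

theorem left_mem (x y : X) : x ∈ H.arc x y := by
  by_cases hxy : x = y
  · rw [hxy, arc_self]; rfl
  obtain ⟨γ, hc, hi, h0, h1, him⟩ := H.exists_param hxy
  rw [← him]
  exact ⟨0, by simp, h0⟩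

theorem right_mem (x y : X) : y ∈ H.arc x y := by
  rw [arc_comm]; exact H.left_mem y x

theorem arc_preconn (x y : X) : IsPreconnected (H.arc x y) := by
  by_cases hxy : x = y
  · rw [hxy, arc_self]; exact isPreconnected_singleton
  obtain ⟨γ, hc, hi, h0, h1, him⟩ := H.exists_param hxy
  rw [← him]
  exact isPreconnected_Icc.image _ hc.continuousOn

theorem arc_compact (x y : X) : IsCompact (H.arc x y) := by
  by_cases hxy : x = y
  · rw [hxy, arc_self]; exact isCompact_singleton
  obtain ⟨γ, hc, hi, h0, h1, him⟩ := H.exists_param hxy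
  rw [← him]
  exact isCompact_Icc.image hc

theorem arc_split {x y z : X} (hz : z ∈ H.arc x y) :
    H.arc x y = H.arc x z ∪ H.arc z y ∧ H.arc x z ∩ H.arc z y = {z} := by
  by_cases hxy : x = y
  · subst hxy
    rw [arc_self, mem_singleton_iff] at hz
    subst hz
    simp [arc_self]
  obtain ⟨γ, hc, hi, h0, h1, him⟩ := H.exists_param hxy
  rw [← him] at hz ⊢
  obtain ⟨t, ht, rfl⟩ := hz
  have e1 := H.arc_of_param ht.1 hc (hi.mono (Icc_subset_Icc_right ht.2))
  have e2 := H.arc_of_param ht.2 hc (hi.mono (Icc_subset_Icc_left ht.1))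
  rw [h0] at e1
  rw [h1] at e2
  rw [← e1, ← e2]
  refine ⟨by rw [← image_union, Icc_union_Icc_eq_Icc ht.1 ht.2], ?_⟩
  rw [← hi.image_inter (Icc_subset_Icc_right ht.2) (Icc_subset_Icc_left ht.1)]
  rw [show Icc 0 t ∩ Icc t 1 = {t} by
    ext s; simp only [mem_inter_iff, mem_Icc, mem_singleton_iff]
    constructor
    · rintro ⟨⟨_, h⟩, h', _⟩; exact le_antisymm h h'
    · rintro rfl; exact ⟨⟨ht.1, le_rfl⟩, le_rfl, ht.2⟩]
  simp

theorem arc_sub_left {x y z : X} (hz : z ∈ H.arc x y) : H.arc x z ⊆ H.arc x y := by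
  rw [(H.arc_split hz).1]; exact subset_union_left

theorem arc_sub_right {x y z : X} (hz : z ∈ H.arc x y) : H.arc z y ⊆ H.arc x y := by
  rw [(H.arc_split hz).1]; exact subset_union_right

theorem arc_meet {x y z w : X} (hz : z ∈ H.arc x y) (h1 : w ∈ H.arc x z)
    (h2 : w ∈ H.arc z y) : w = z := by
  have : w ∈ H.arc x z ∩ H.arc z y := ⟨h1, h2⟩
  rwa [(H.arc_split hz).2] at this

theorem arc_concat {x y z : X} (h : ∀ w ∈ H.arc x z, w ∈ H.arc z y → w = z) :
    H.arc x y = H.arc x z ∪ H.arc z y := by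
  by_cases hxz : x = z
  · subst hxz
    rw [arc_self]
    symm
    rw [union_eq_right]
    rintro w rfl
    exact H.left_mem _ _
  by_cases hzy : z = y
  · subst hzy
    rw [arc_self]
    symm
    rw [union_eq_left]
    rintro w rfl
    exact H.right_mem _ _
  obtain ⟨γ, hc, hi, h0, h1, him⟩ := H.exists_param hxz
  obtain ⟨δ, dc, di, d0, d1, dim⟩ := H.exists_param hzy
  let η : ℝ → X := fun t => if t ≤ 1 then γ t else δ (t - 1)
  have hηl : ∀ t, t ≤ 1 → η t = γ t := fun t ht => if_pos ht
  have hηr : ∀ t, 1 ≤ t → η t = δ (t - 1) := by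
    intro t ht
    rcases eq_or_lt_of_le ht with rfl | h
    · rw [hηl 1 le_rfl, h1, sub_self, d0]
    · exact if_neg (not_le.2 h)
  have hηc : Continuous η := by
    refine Continuous.if_le hc (dc.comp (continuous_id.sub continuous_const)) continuous_id
      continuous_const ?_
    rintro t rfl
    simp [h1, d0]
  have hmix : ∀ s ∈ Icc (0:ℝ) 1, ∀ t ∈ Icc (1:ℝ) 2, η s = η t → s = t := by
    intro s hs t ht hst
    rw [hηl s hs.2, hηr t ht.1] at hst
    have ht' : t - 1 ∈ Icc (0:ℝ) 1 := ⟨by linarith [ht.1], by linarith [ht.2]⟩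
    have hw := h (γ s) (him ▸ ⟨s, hs, rfl⟩) (by rw [hst, ← dim]; exact ⟨_, ht', rfl⟩)
    have e1 : s = 1 := hi hs (by simp) (hw.trans h1.symm)
    have e2 : t - 1 = 0 := di ht' (by simp) ((hst.symm.trans hw).trans d0.symm)
    linarith
  have hηi : InjOn η (Icc 0 2) := by
    intro s hs t ht hst
    rcases le_total s 1 with h1s | h1s <;> rcases le_total t 1 with h1t | h1t
    · rw [hηl s h1s, hηl t h1t] at hst
      exact hi ⟨hs.1, h1s⟩ ⟨ht.1, h1t⟩ hst
    · exact hmix s ⟨hs.1, h1s⟩ t ⟨h1t, ht.2⟩ hst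
    · exact (hmix t ⟨ht.1, h1t⟩ s ⟨h1s, hs.2⟩ hst.symm).symm
    · rw [hηr s h1s, hηr t h1t] at hst
      have := di (x₁ := s - 1) (x₂ := t - 1) ⟨by linarith, by linarith [hs.2]⟩
        ⟨by linarith, by linarith [ht.2]⟩ hst
      linarith
  have a1 := H.arc_of_param zero_le_one hηc (hηi.mono (Icc_subset_Icc_right one_le_two))
  have a2 := H.arc_of_param one_le_two hηc (hηi.mono (Icc_subset_Icc_left zero_le_one))
  have a3 := H.arc_of_param zero_le_two hηc hηi
  have e0 : η 0 = x := by rw [hηl 0 zero_le_one, h0]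
  have e1 : η 1 = z := by rw [hηl 1 le_rfl, h1]
  have e2 : η 2 = y := by rw [hηr 2 one_le_two, ← d1]; norm_num
  rw [e0, e1] at a1
  rw [e1, e2] at a2
  rw [e0, e2] at a3
  rw [← a1, ← a2, ← a3, ← image_union, Icc_union_Icc_eq_Icc zero_le_one one_le_two]

theorem first_hit {x z : X} {K : Set X} (hK : IsClosed K) (hx : x ∈ K) :
    ∃ p ∈ K, p ∈ H.arc z x ∧ ∀ w ∈ H.arc z p, w ∈ K → w = p := by
  by_cases hzx : z = x
  · subst hzx
    refine ⟨z, hx, H.left_mem _ _, ?_⟩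
    intro w hw _
    rwa [arc_self] at hw
  obtain ⟨γ, hc, hi, h0, h1, him⟩ := H.exists_param hzx
  have hcomp : IsCompact (Icc (0:ℝ) 1 ∩ γ ⁻¹' K) := isCompact_Icc.inter_right (hK.preimage hc)
  obtain ⟨t, ⟨ht, htK⟩, hmin⟩ := hcomp.exists_isLeast ⟨1, by simp, by simpa [h1] using hx⟩
  refine ⟨γ t, htK, him ▸ ⟨t, ht, rfl⟩, ?_⟩
  have e1 := H.arc_of_param ht.1 hc (hi.mono (Icc_subset_Icc_right ht.2))
  rw [h0] at e1
  rw [← e1]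
  rintro w ⟨s, hs, rfl⟩ hsK
  have := hmin ⟨⟨hs.1, hs.2.trans ht.2⟩, hsK⟩
  rw [le_antisymm hs.2 this]

/-- `m` is a median of `x, y, z` -/
def Med (x y z m : X) : Prop := m ∈ H.arc x y ∧ m ∈ H.arc y z ∧ m ∈ H.arc x z

theorem exists_med (x y z : X) : ∃ m, H.Med x y z m := by
  have := H.t2
  obtain ⟨p, hp, _, h⟩ := H.first_hit (z := z) (H.arc_compact x y).isClosed (H.left_mem x y)
  have h1 : H.arc z x = H.arc z p ∪ H.arc p x := H.arc_concat (fun w hw hw' =>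
    h w hw (H.arc_sub_left hp (by rwa [arc_comm])))
  have h2 : H.arc z y = H.arc z p ∪ H.arc p y := H.arc_concat (fun w hw hw' =>
    h w hw (H.arc_sub_right hp hw'))
  refine ⟨p, hp, ?_, ?_⟩
  · rw [arc_comm, h2]; exact Or.inl (H.right_mem _ _)
  · rw [arc_comm, h1]; exact Or.inl (H.right_mem _ _)

theorem med_swap {x y z m : X} (h : H.Med x y z m) : H.Med y x z m :=
  ⟨by rw [arc_comm]; exact h.1, h.2.2, h.2.1⟩

theorem med_rot {x y z m : X} (h : H.Med x y z m) : H.Med y z x m :=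
  ⟨h.2.1, by rw [arc_comm]; exact h.2.2, by rw [arc_comm]; exact h.1⟩

theorem med_unique {x y z m m' : X} (h : H.Med x y z m) (h' : H.Med x y z m') : m' = m := by
  obtain ⟨a, b, c⟩ := h
  obtain ⟨a', b', c'⟩ := h'
  have A : ∀ u v : X, m ∈ H.arc u v → m' ∈ H.arc u m → m' ∈ H.arc v m → m' = m :=
    fun u v h1 h2 h3 => H.arc_meet h1 h2 (by rwa [arc_comm])
  rw [(H.arc_split a).1, H.arc_comm m] at a'
  rw [(H.arc_split b).1, H.arc_comm m] at b'
  rw [(H.arc_split c).1, H.arc_comm m] at c'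
  rcases a' with a' | a' <;> rcases b' with b' | b' <;> rcases c' with c' | c'
  · exact A x y a a' b'
  · exact A y z b b' c'
  · exact A x z c a' b'
  · exact A x z c a' b'
  · exact A x y a c' a'
  · exact A y z b a' c'
  · exact A x z c c' b'
  · exact A y z b a' b'

theorem arc_triangle (x y z : X) : H.arc x z ⊆ H.arc x y ∪ H.arc y z := by
  obtain ⟨m, a, b, c⟩ := H.exists_med x y z
  rw [(H.arc_split c).1]
  exact union_subset_union (H.arc_sub_left a) (H.arc_sub_right b)

theorem image_arc {f : X → X} (hf : Continuous f) {x y : X} (hi : InjOn f (H.arc x y)) :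
    f '' H.arc x y = H.arc (f x) (f y) := by
  by_cases hxy : x = y
  · subst hxy; simp [arc_self]
  obtain ⟨γ, hc, gi, h0, h1, him⟩ := H.exists_param hxy
  have := H.arc_of_param (γ := f ∘ γ) zero_le_one (hf.comp hc)
    (hi.comp gi (fun t ht => him ▸ ⟨t, ht, rfl⟩))
  rw [image_comp, him] at this
  simpa [h0, h1] using this

/-- small arcs around interior points -/
theorem small_arc {x y u : X} (hu : u ∈ H.arc x y) (hux : u ≠ x) (huy : u ≠ y)
    {U : Set X} (hU : IsOpen U) (huU : u ∈ U) :
    ∃ u₁ u₂, u₁ ≠ u ∧ u₂ ≠ u ∧ u ∈ H.arc u₁ u₂ ∧ H.arc u₁ u₂ ⊆ U ∧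
      H.arc u₁ u₂ ⊆ H.arc x y := by
  have hxy : x ≠ y := by
    rintro rfl
    rw [arc_self] at hu
    exact hux hu
  obtain ⟨γ, hc, hi, h0, h1, him⟩ := H.exists_param hxy
  rw [← him] at hu
  obtain ⟨t, ht, rfl⟩ := hu
  have ht0 : 0 < t := lt_of_le_of_ne ht.1 (by rintro rfl; exact hux h0)
  have ht1 : t < 1 := lt_of_le_of_ne ht.2 (by rintro rfl; exact huy h1)
  have hn : γ ⁻¹' U ∈ nhds t := hc.continuousAt.preimage_mem_nhds (hU.mem_nhds huU)
  obtain ⟨ε, hε, hball⟩ := Metric.mem_nhds_iff.1 hn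
  obtain ⟨δ, hδ, hδm⟩ := exists_between (lt_min hε (lt_min ht0 (by linarith : 0 < 1 - t)))
  rw [lt_min_iff, lt_min_iff] at hδm
  have hsub : Icc (t - δ) (t + δ) ⊆ Icc 0 1 := Icc_subset_Icc (by linarith) (by linarith)
  have e := H.arc_of_param (a := t - δ) (b := t + δ) (by linarith) hc (hi.mono hsub)
  have m1 : t - δ ∈ Icc (t - δ) (t + δ) := ⟨le_rfl, by linarith⟩
  have m2 : t + δ ∈ Icc (t - δ) (t + δ) := ⟨by linarith, le_rfl⟩
  refine ⟨γ (t - δ), γ (t + δ), ?_, ?_, ?_, ?_, ?_⟩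
  · intro h
    have := hi (hsub m1) ht h
    linarith
  · intro h
    have := hi (hsub m2) ht h
    linarith
  · rw [← e]; exact ⟨t, ⟨by linarith, by linarith⟩, rfl⟩
  · rw [← e]
    rintro _ ⟨s, hs, rfl⟩
    apply hball
    rw [Metric.mem_ball, Real.dist_eq, abs_lt]
    constructor <;> linarith [hs.1, hs.2]
  · rw [← e, ← him]
    exact image_mono hsub

theorem arc_infinite {x y : X} (hxy : x ≠ y) : (H.arc x y).Infinite := by
  obtain ⟨γ, hc, hi, h0, h1, him⟩ := H.exists_param hxy
  rw [← him]
  exact (Icc_infinite zero_lt_one).image hi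

/-- nonseparating points on an arc are finite in number -/
theorem bad_finite (y z : X) :
    {w ∈ H.arc y z | w ≠ y ∧ w ≠ z ∧ z ∈ connectedComponentIn ({w}ᶜ : Set X) y}.Finite := by
  have := H.t2
  have := H.conn
  have := H.compact
  set B := {w ∈ H.arc y z | w ≠ y ∧ w ≠ z ∧ z ∈ connectedComponentIn ({w}ᶜ : Set X) y}
  have hB : ∀ w ∈ B, ∀ v ∈ H.arc y z, v ≠ w → v ∈ connectedComponentIn ({w}ᶜ : Set X) y := by
    rintro w ⟨hw, hwy, hwz, hbad⟩ v hv hvw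
    by_cases hm : w ∈ H.arc y v
    · rw [cc_eq hbad]
      have : w ∉ H.arc v z := fun h => hvw (H.arc_meet hv hm h).symm
      exact sub_cc (H.arc_preconn v z) (H.right_mem _ _) this (H.left_mem _ _)
    · exact sub_cc (H.arc_preconn y v) (H.left_mem _ _) hm (H.right_mem _ _)
  have hend : (B \ {x : X | IsEndpoint x}).Finite := by
    have hex : ∀ w ∈ B \ {x : X | IsEndpoint x}, ∃ e, e ≠ w ∧ IsEndpoint e ∧
        e ∉ connectedComponentIn ({w}ᶜ : Set X) y := by
      rintro w ⟨⟨hw, hwy, hwz, hbad⟩, hne⟩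
      have : ∃ r, r ≠ w ∧ r ∉ connectedComponentIn ({w}ᶜ : Set X) y := by
        by_contra hcon
        push Not at hcon
        apply hne
        have : arms w = {connectedComponentIn ({w}ᶜ : Set X) y} := by
          ext E
          constructor
          · rintro ⟨r, hr, rfl⟩
            exact (cc_eq (hcon r hr)).symm
          · rintro rfl
            exact ⟨y, hwy.symm, rfl⟩
        show (arms w).ncard = 1
        rw [this, ncard_singleton]
      obtain ⟨r, hrw, hr⟩ := this
      obtain ⟨e, he, hee⟩ := arm_has_endpoint H.arms_finite hrw
      refine ⟨e, ?_, hee, ?_⟩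
      · rintro rfl; exact notMem_cc _ _ he
      · intro h
        apply hr
        rw [cc_eq h, ← cc_eq he]
        exact mem_cc hrw
    choose! e he using hex
    refine Set.Finite.of_injOn (f := e) (t := {x : X | IsEndpoint x})
      (fun w hw => (he w hw).2.1) ?_ H.endpoint_finite
    intro w hw v hv hwv
    by_contra hne
    have hv' : v ∈ connectedComponentIn ({w}ᶜ : Set X) y :=
      hB w hw.1 v hv.1.1 (fun h => hne h.symm)
    have hw' : w ∈ connectedComponentIn ({v}ᶜ : Set X) y := hB v hv.1 w hw.1.1 hne
    have h1 := he w hw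
    have h2 := he v hv
    rw [← hwv] at h2
    have hsub : insert w (connectedComponentIn ({w}ᶜ : Set X) (e w)) ⊆
        connectedComponentIn ({v}ᶜ : Set X) (e w) := by
      refine sub_cc (preconn_insert H.arms_finite h1.1) (Or.inr (mem_cc h1.1)) ?_
      rintro (h | h)
      · exact hne h.symm
      · apply h1.2.2
        rw [cc_eq hv', ← cc_eq h]
        exact mem_cc h1.1
    apply h2.2.2
    rw [cc_eq hw', ← cc_eq (hsub (Or.inl rfl))]
    exact mem_cc h2.1
  refine (hend.union H.endpoint_finite).subset ?_
  intro w hw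
  by_cases h : IsEndpoint w
  · exact Or.inr h
  · exact Or.inl ⟨hw, h⟩

theorem exists_good {y x : X} (hxy : y ≠ x) : ∃ w ∈ H.arc y x, w ≠ y ∧ w ≠ x ∧
    x ∉ connectedComponentIn ({w}ᶜ : Set X) y := by
  have hfin := (H.bad_finite y x).union (Set.toFinite ({y, x} : Set X))
  obtain ⟨w, hw, hwn⟩ := (H.arc_infinite hxy).exists_notMem_finset hfin.toFinset
  rw [Set.Finite.mem_toFinset] at hwn
  have h1 : w ≠ y := by rintro rfl; exact hwn (Or.inr (by simp))
  have h2 : w ≠ x := by rintro rfl; exact hwn (Or.inr (by simp))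
  exact ⟨w, hw, h1, h2, fun h => hwn (Or.inl ⟨hw, h1, h2, h⟩)⟩

theorem mem_cc_of_notMem_arc {x y z : X} (h : x ∉ H.arc y z) :
    z ∈ connectedComponentIn ({x}ᶜ : Set X) y :=
  sub_cc (H.arc_preconn y z) (H.left_mem _ _) h (H.right_mem _ _)

theorem arc_isOpen (x y : X) : IsOpen {z | z ≠ x ∧ x ∉ H.arc y z} := by
  have := H.t2
  rw [isOpen_iff_forall_mem_open]
  rintro z ⟨hzx, hz⟩
  obtain ⟨w, hw, hwz, hwx, hwn⟩ := H.exists_good hzx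
  refine ⟨connectedComponentIn ({w}ᶜ : Set X) z, ?_, isOpen_cc H.arms_finite _ _,
    mem_cc hwz.symm⟩
  intro v hv
  refine ⟨?_, ?_⟩
  · rintro rfl; exact hwn hv
  intro hx
  have hxz : x ∈ H.arc z v := by
    rcases H.arc_triangle y z v hx with h | h
    · exact absurd h hz
    · exact h
  have hwv : w ∈ H.arc x v := by
    by_contra hcon
    have := H.mem_cc_of_notMem_arc (y := x) (z := v) hcon
    rw [cc_eq hv, ← cc_eq this] at hwn
    exact hwn (mem_cc hwx.symm)
  exact hwx (H.arc_meet hxz hw hwv)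

theorem mem_cc_iff {x y z : X} (hy : y ≠ x) (hz : z ≠ x) :
    z ∈ connectedComponentIn ({x}ᶜ : Set X) y ↔ x ∉ H.arc y z := by
  refine ⟨fun h => ?_, H.mem_cc_of_notMem_arc⟩
  intro hx
  have hpre : IsPreconnected (connectedComponentIn ({x}ᶜ : Set X) y) :=
    isPreconnected_connectedComponentIn
  have hopen : IsOpen (⋃ v ∈ {v : X | x ∈ H.arc y v}, {z | z ≠ x ∧ x ∉ H.arc v z}) :=
    isOpen_biUnion (fun v _ => H.arc_isOpen x v)
  obtain ⟨v, hv, ⟨hvx, hv1⟩, hv2⟩ := hpre _ _ (H.arc_isOpen x y) hopen (by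
      intro v hv
      have hvx : v ≠ x := by rintro rfl; exact notMem_cc _ _ hv
      by_cases h : x ∈ H.arc y v
      · right
        simp only [mem_iUnion]
        exact ⟨v, h, hvx, by rw [arc_self]; exact fun h => hvx h.symm⟩
      · exact Or.inl ⟨hvx, h⟩)
    ⟨y, mem_cc hy, hy, by rw [arc_self]; exact fun h => hy h.symm⟩
    ⟨z, h, by
      simp only [mem_iUnion]
      exact ⟨z, hx, hz, by rw [arc_self]; exact fun h => hz h.symm⟩⟩
  simp only [mem_iUnion] at hv2
  obtain ⟨u, hu, _, hu2⟩ := hv2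
  rcases H.arc_triangle y v u hu with h | h
  · exact hv1 h
  · rw [arc_comm] at h; exact hu2 h

end HubbardTree

end Helpers2
section Helpers3

open Set

namespace HubbardTree

variable {X : Type*} [TopologicalSpace X] (H : HubbardTree X)

theorem local_inj {u : X} (hu : u ≠ H.c0) : ∃ U : Set X, IsOpen U ∧ u ∈ U ∧ InjOn H.f U := by
  obtain ⟨U, hU, huU, hemb⟩ := H.local_homeo u hu
  refine ⟨U, hU, huU, fun a ha b hb h => ?_⟩
  have := hemb.injective (a₁ := ⟨a, ha⟩) (a₂ := ⟨b, hb⟩) h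
  exact congrArg Subtype.val this

theorem local_arc {x y u : X} (hu : u ∈ H.arc x y) (hux : u ≠ x) (huy : u ≠ y)
    (hu0 : u ≠ H.c0) : ∃ u₁ u₂, u₁ ∈ H.arc x y ∧ u₂ ∈ H.arc x y ∧ H.f u₁ ≠ H.f u ∧
      H.f u₂ ≠ H.f u ∧ H.f u ∈ H.arc (H.f u₁) (H.f u₂) := by
  obtain ⟨U, hU, huU, hinj⟩ := H.local_inj hu0
  obtain ⟨u₁, u₂, h1, h2, hm, hsU, hs⟩ := H.small_arc hu hux huy hU huU
  have e := H.image_arc H.cont (hinj.mono hsU)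
  have m1 := hsU (H.left_mem u₁ u₂)
  have m2 := hsU (H.right_mem u₁ u₂)
  refine ⟨u₁, u₂, hs (H.left_mem _ _), hs (H.right_mem _ _), fun h => h1 (hinj m1 huU h),
    fun h => h2 (hinj m2 huU h), ?_⟩
  rw [← e]
  exact ⟨u, hm, rfl⟩

theorem inj_pt {x y : X} (hxy : x ≠ y) (h0 : H.c0 ∈ H.arc x y → H.c0 = x ∨ H.c0 = y) :
    H.f x ≠ H.f y := by
  have := H.t2
  have := H.conn
  intro hf
  have hint : ∀ u ∈ H.arc x y, u ≠ x → u ≠ y → u ≠ H.c0 := by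
    rintro u hu hux huy rfl
    rcases h0 hu with h | h
    · exact hux h
    · exact huy h
  have hK : IsCompact (H.f '' H.arc x y) := (H.arc_compact x y).image H.cont
  obtain ⟨q, hqK, hq⟩ := exists_max H.arms_finite (H.f x) hK ⟨_, x, H.left_mem _ _, rfl⟩
  have hqr : q ≠ H.f x := by
    rintro rfl
    obtain ⟨w, hw, hwx, hwy, -⟩ := H.exists_good hxy
    obtain ⟨u₁, u₂, m1, m2, n1, -, -⟩ := H.local_arc hw hwx hwy (hint w hw hwx hwy)
    have a1 := hq _ ⟨u₁, m1, rfl⟩ (by rw [cc_self]; simp)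
    have a2 := hq _ ⟨w, hw, rfl⟩ (by rw [cc_self]; simp)
    exact n1 (a1.trans a2.symm)
  obtain ⟨u, hu, rfl⟩ := hqK
  have hux : u ≠ x := by rintro rfl; exact hqr rfl
  have huy : u ≠ y := by rintro rfl; exact hqr hf.symm
  obtain ⟨u₁, u₂, m1, m2, n1, n2, hm⟩ := H.local_arc hu hux huy (hint u hu hux huy)
  have k1 : H.f u₁ ∈ connectedComponentIn ({H.f u}ᶜ : Set X) (H.f x) := by
    by_contra h
    exact n1 (hq _ ⟨u₁, m1, rfl⟩ h)
  have k2 : H.f u₂ ∈ connectedComponentIn ({H.f u}ᶜ : Set X) (H.f x) := by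
    by_contra h
    exact n2 (hq _ ⟨u₂, m2, rfl⟩ h)
  rw [cc_eq k1] at k2
  exact (H.mem_cc_iff n1 n2).1 k2 hm

theorem inj_arc {x y : X} (h0 : H.c0 ∈ H.arc x y → H.c0 = x ∨ H.c0 = y) :
    InjOn H.f (H.arc x y) := by
  have key : ∀ a ∈ H.arc x y, ∀ b ∈ H.arc x y, b ∈ H.arc a y → H.f a = H.f b → a = b := by
    intro a ha b hb hbay hf
    by_contra hne
    refine H.inj_pt hne (fun hc => ?_) hf
    have hcay : H.c0 ∈ H.arc a y := H.arc_sub_left hbay hc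
    rcases h0 (H.arc_sub_right ha hcay) with h | h
    · left
      rw [h]
      exact H.arc_meet ha (H.left_mem _ _) (h ▸ hcay)
    · right
      exact H.arc_meet hbay hc (h ▸ H.right_mem _ _)
  intro a ha b hb hf
  have hb' := hb
  rw [(H.arc_split ha).1] at hb'
  rcases hb' with h | h
  · refine (key b hb a ha ?_ hf.symm).symm
    have := (H.arc_split hb).1
    rw [this] at ha
    rcases ha with h' | h'
    · have : a = b := by
        have := H.arc_split h
        have h3 : a ∈ H.arc x b := h'
        exact H.arc_meet h h3 (H.right_mem _ _)
      rw [this]; exact H.left_mem _ _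
    · exact h'
  · exact key a ha b hb h hf

theorem f_arc {x y : X} (h0 : H.c0 ∈ H.arc x y → H.c0 = x ∨ H.c0 = y) :
    H.f '' H.arc x y = H.arc (H.f x) (H.f y) := H.image_arc H.cont (H.inj_arc h0)

theorem not_endpoint_of_arc {x y z : X} (hx : x ≠ z) (hy : y ≠ z) (h : z ∈ H.arc x y) :
    ¬ IsEndpoint z := by
  intro he
  rw [IsEndpoint, ncard_eq_one] at he
  obtain ⟨C, hC⟩ := he
  have h1 : connectedComponentIn ({z}ᶜ : Set X) x ∈ arms z := ⟨x, hx, rfl⟩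
  have h2 : connectedComponentIn ({z}ᶜ : Set X) y ∈ arms z := ⟨y, hy, rfl⟩
  rw [hC, mem_singleton_iff] at h1 h2
  have : y ∈ connectedComponentIn ({z}ᶜ : Set X) x := by rw [h1, ← h2]; exact mem_cc hy
  exact (H.mem_cc_iff hx hy).1 this h

theorem arc_of_not_endpoint {z : X} (h : ¬ IsEndpoint z) (hne : ∃ r, r ≠ z) :
    ∃ x y, x ≠ z ∧ y ≠ z ∧ z ∈ H.arc x y := by
  obtain ⟨r, hr⟩ := hne
  by_contra hcon
  push Not at hcon
  apply h
  have : arms z = {connectedComponentIn ({z}ᶜ : Set X) r} := by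
    ext E
    constructor
    · rintro ⟨y, hy, rfl⟩
      exact (cc_eq ((H.mem_cc_iff hr hy).2 (hcon r y hr hy))).symm
    · rintro rfl
      exact ⟨r, hr, rfl⟩
  rw [IsEndpoint, this, ncard_singleton]

theorem exists_ne_pt (H : HubbardTree X) (z : X) : ∃ r : X, r ≠ z := by
  by_cases h : H.c0 = z
  · exact ⟨H.f H.c0, fun h' => H.crit_not_fixed (h'.trans h.symm)⟩
  · exact ⟨_, h⟩

/-- the critical point has at most two arms -/
theorem c0_two_arms (a b c : X) (ha : a ≠ H.c0) (hb : b ≠ H.c0) (hc : c ≠ H.c0)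
    (hab : H.c0 ∈ H.arc a b) (hbc : H.c0 ∈ H.arc b c) (hac : H.c0 ∈ H.arc a c) : False := by
  have := H.t2
  have := H.conn
  have := H.compact
  have hc0 : ¬ IsEndpoint H.c0 := H.not_endpoint_of_arc ha hb hab
  have hend : ∀ x : X, H.c0 ∈ H.arc H.c0 x → H.c0 = H.c0 ∨ H.c0 = x := fun _ _ => Or.inl rfl
  have hfa : H.f a ≠ H.f H.c0 := fun h => H.inj_pt ha.symm (hend a) h.symm
  have hfb : H.f b ≠ H.f H.c0 := fun h => H.inj_pt hb.symm (hend b) h.symm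
  have hfc : H.f c ≠ H.f H.c0 := fun h => H.inj_pt hc.symm (hend c) h.symm
  have hc1 : ¬ IsEndpoint (H.f H.c0) := by
    intro he
    have hno : ∀ x y, x ≠ H.f H.c0 → y ≠ H.f H.c0 → H.f H.c0 ∉ H.arc x y :=
      fun x y hx hy h => H.not_endpoint_of_arc hx hy h he
    obtain ⟨p, p1, p2, p3⟩ := H.exists_med (H.f H.c0) (H.f a) (H.f b)
    have hp : p ≠ H.f H.c0 := by
      rintro rfl; exact hno _ _ hfa hfb p2
    obtain ⟨q, q1, q2, q3⟩ := H.exists_med (H.f H.c0) p (H.f c)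
    have hq : q ≠ H.f H.c0 := by
      rintro rfl; exact hno _ _ hp hfc q2
    have k1 : q ∈ H.arc (H.f H.c0) (H.f a) := H.arc_sub_left p1 q1
    have k2 : q ∈ H.arc (H.f H.c0) (H.f b) := H.arc_sub_left p3 q1
    rw [← H.f_arc (hend _)] at k1 k2 q3
    obtain ⟨a', ha', ea⟩ := k1
    obtain ⟨b', hb', eb⟩ := k2
    obtain ⟨c', hc', ec⟩ := q3
    have hne : ∀ x, H.f x = q → x ≠ H.c0 := by rintro x rfl rfl; exact hq rfl
    have n1 : a' ≠ b' := by
      rintro rfl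
      rw [arc_comm] at ha'
      exact hne _ ea (H.arc_meet hab ha' hb')
    have n2 : b' ≠ c' := by
      rintro rfl
      rw [arc_comm] at hb'
      exact hne _ eb (H.arc_meet hbc hb' hc')
    have n3 : a' ≠ c' := by
      rintro rfl
      rw [arc_comm] at ha'
      exact hne _ ea (H.arc_meet hac ha' hc')
    obtain ⟨u, v, huv⟩ := H.two_preimages q
    have i1 : a' ∈ ({u, v} : Set X) := huv ea
    have i2 : b' ∈ ({u, v} : Set X) := huv eb
    have i3 : c' ∈ ({u, v} : Set X) := huv ec
    simp only [mem_insert_iff, mem_singleton_iff] at i1 i2 i3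
    rcases i1 with rfl | rfl <;> rcases i2 with rfl | rfl <;> rcases i3 with rfl | rfl <;>
      simp_all
  have hall : ∀ n, ¬ IsEndpoint (H.f^[n] H.c0) := by
    intro n
    induction n with
    | zero => exact hc0
    | succ n ih =>
      rw [Function.iterate_succ_apply']
      by_cases h : H.f^[n] H.c0 = H.c0
      · rw [h]; exact hc1
      · obtain ⟨x, y, hx, hy, hm⟩ := H.arc_of_not_endpoint ih (H.exists_ne_pt _)
        obtain ⟨u₁, u₂, -, -, n1, n2, hm'⟩ := H.local_arc hm hx.symm hy.symm h
        exact H.not_endpoint_of_arc n1 n2 hm'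
  obtain ⟨e, -, he⟩ := arm_has_endpoint H.arms_finite ha
  obtain ⟨k, hk⟩ := H.endpoints_on_orbit e he
  exact hall k (hk ▸ he)

theorem sym_star {x : X} : H.symOf x = Sym.star ↔ x = H.c0 := by
  unfold symOf
  split_ifs <;> simp_all

theorem c1_ne : H.c1 ≠ H.c0 := H.crit_not_fixed

theorem sep_iff (x y : X) :
    H.c0 ∉ H.arc x y ↔ (H.symOf x = H.symOf y ∧ H.symOf x ≠ Sym.star) := by
  by_cases hx : x = H.c0
  · subst hx
    have := H.left_mem H.c0 y
    have h2 := (H.sym_star (x := H.c0)).2 rfl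
    simp [this, h2]
  by_cases hy : y = H.c0
  · subst hy
    have := H.right_mem x H.c0
    have h2 := (H.sym_star (x := H.c0)).2 rfl
    rw [h2]
    simp [this]
  have hs : H.symOf x ≠ Sym.star := fun h => hx (H.sym_star.1 h)
  have e : H.symOf x = H.symOf y ↔ (x ∈ H.T1 ↔ y ∈ H.T1) := by
    unfold symOf
    rw [if_neg hx, if_neg hy]
    by_cases h1 : x ∈ H.T1 <;> by_cases h2 : y ∈ H.T1 <;> simp [h1, h2]
  have t : ∀ z, z ≠ H.c0 → (z ∈ H.T1 ↔ H.c0 ∉ H.arc H.c1 z) :=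
    fun z hz => H.mem_cc_iff H.c1_ne hz
  rw [e, t x hx, t y hy]
  constructor
  · intro h
    refine ⟨⟨fun h1 h2 => ?_, fun h1 h2 => ?_⟩, hs⟩
    · rcases H.arc_triangle _ x _ h2 with h' | h'
      · exact h1 h'
      · exact h h'
    · rcases H.arc_triangle _ y _ h2 with h' | h'
      · exact h1 h'
      · rw [arc_comm] at h'; exact h h'
  · rintro ⟨h, -⟩ hc
    by_cases hx1 : H.c0 ∈ H.arc H.c1 x
    · have hy1 : H.c0 ∈ H.arc H.c1 y := by
        by_contra h'
        exact h.2 h' hx1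
      exact H.c0_two_arms _ _ _ H.c1_ne hx hy hx1 hc hy1
    · have hy1 := h.1 hx1
      rcases H.arc_triangle x H.c1 y hc with h' | h'
      · rw [arc_comm] at h'; exact hx1 h'
      · exact hy1 h'

theorem med_none {x y z m : X} (hm : H.Med x y z m) (h1 : H.c0 ∈ H.arc x y)
    (h2 : H.c0 ∈ H.arc y z) (h3 : H.c0 ∈ H.arc x z) : m = H.c0 :=
  H.med_unique (m := H.c0) ⟨h1, h2, h3⟩ hm

/-- the third point of the triod, cut off at the critical point if necessary -/
noncomputable def cut (x z : X) : X :=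
  open Classical in if H.symOf z = H.symOf x ∨ H.symOf z = Sym.star then z else H.c0

theorem med_maj {x y z m : X} (hm : H.Med x y z m) (h : H.c0 ∉ H.arc x y) :
    H.symOf m = H.symOf x ∧ H.Med (H.f x) (H.f y) (H.f (H.cut x z)) (H.f m) := by
  have hmx : H.c0 ∉ H.arc m x := by
    rw [arc_comm]; exact fun h' => h (H.arc_sub_left hm.1 h')
  have hmy : H.c0 ∉ H.arc m y := fun h' => h (H.arc_sub_right hm.1 h')
  have hsm := ((H.sep_iff _ _).1 hmx)
  have hxy := ((H.sep_iff _ _).1 h)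
  refine ⟨hsm.1, ?_⟩
  have hcutm : H.Med x y (H.cut x z) m ∧ (H.c0 ∈ H.arc y (H.cut x z) → H.c0 = H.cut x z) ∧
      (H.c0 ∈ H.arc x (H.cut x z) → H.c0 = H.cut x z) := by
    unfold cut
    split_ifs with hz
    · refine ⟨hm, ?_, ?_⟩
      · intro h'
        by_contra hne
        have hs : H.symOf z ≠ Sym.star := fun h => hne (H.sym_star.1 h).symm
        refine (H.sep_iff y z).2 ⟨?_, hxy.1 ▸ hxy.2⟩ h'
        rw [← hxy.1]
        exact (hz.resolve_right hs).symm
      · intro h'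
        by_contra hne
        have hs : H.symOf z ≠ Sym.star := fun h => hne (H.sym_star.1 h).symm
        exact (H.sep_iff x z).2 ⟨(hz.resolve_right hs).symm, hxy.2⟩ h'
    · push Not at hz
      have hxz : H.c0 ∈ H.arc x z := by
        by_contra h'
        exact hz.1 ((H.sep_iff _ _).1 h').1.symm
      have hyz : H.c0 ∈ H.arc y z := by
        by_contra h'
        exact hz.1 (((H.sep_iff _ _).1 h').1.symm.trans hxy.1.symm)
      refine ⟨⟨hm.1, ?_, ?_⟩, fun _ => rfl, fun _ => rfl⟩
      · have := hm.2.1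
        rw [(H.arc_split hyz).1] at this
        rcases this with h' | h'
        · exact h'
        · have h1 := (H.arc_split hm.2.1).1
          rw [h1] at hyz
          rcases hyz with h2 | h2
          · rw [arc_comm] at h2; exact absurd h2 hmy
          · exfalso
            have : m = H.c0 := H.med_unique (x := m) (y := H.c0) (z := z) (m := H.c0)
              ⟨H.right_mem _ _, H.left_mem _ _, h2⟩ ⟨H.left_mem _ _, h', H.left_mem _ _⟩
            exact hsm.2 (H.sym_star.2 this)
      · have := hm.2.2
        rw [(H.arc_split hxz).1] at this
        rcases this with h' | h'
        · exact h'
        · have h1 := (H.arc_split hm.2.2).1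
          rw [h1] at hxz
          rcases hxz with h2 | h2
          · rw [arc_comm] at h2; exact absurd h2 hmx
          · exfalso
            have : m = H.c0 := H.med_unique (x := m) (y := H.c0) (z := z) (m := H.c0)
              ⟨H.right_mem _ _, H.left_mem _ _, h2⟩ ⟨H.left_mem _ _, h', H.left_mem _ _⟩
            exact hsm.2 (H.sym_star.2 this)
  obtain ⟨⟨c1, c2, c3⟩, d1, d2⟩ := hcutm
  refine ⟨?_, ?_, ?_⟩
  · rw [← H.f_arc (fun h' => absurd h' h)]; exact ⟨m, c1, rfl⟩
  · rw [← H.f_arc (fun h' => Or.inr (d1 h'))]; exact ⟨m, c2, rfl⟩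
  · rw [← H.f_arc (fun h' => Or.inr (d2 h'))]; exact ⟨m, c3, rfl⟩

theorem marked_distinct {x y : X} (hx : H.MarkedPt x) (hy : H.MarkedPt y)
    (hs : ∀ n, H.symOf (H.f^[n] x) = H.symOf (H.f^[n] y)) : x = y := by
  by_contra hne
  have key : ∀ n, H.f^[n] x ≠ H.f^[n] y ∧
      H.f^[n] '' H.arc x y = H.arc (H.f^[n] x) (H.f^[n] y) := by
    have hsep : ∀ n, H.f^[n] x ≠ H.f^[n] y → H.c0 ∉ H.arc (H.f^[n] x) (H.f^[n] y) := by
      intro n hn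
      rw [sep_iff]
      refine ⟨hs n, fun h => hn ?_⟩
      rw [H.sym_star.1 h, H.sym_star.1 ((hs n).symm.trans h)]
    intro n
    induction n with
    | zero => exact ⟨hne, by simp⟩
    | succ n ih =>
      have hc := hsep n ih.1
      rw [Function.iterate_succ', Function.comp_apply, Function.comp_apply, image_comp, ih.2]
      exact ⟨H.inj_pt ih.1 (fun h => absurd h hc), H.f_arc (fun h => absurd h hc)⟩
  obtain ⟨n, hn⟩ := H.expansive x y hne hx hy
  rw [(key n).2] at hn
  have := hs n
  by_contra _
  refine (H.sep_iff _ _).2 ⟨this, fun h => (key n).1 ?_⟩ hn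
  rw [H.sym_star.1 h, H.sym_star.1 (this.symm.trans h)]

theorem med_marked {x y z m : X} (hm : H.Med x y z m) (hx : H.MarkedPt x) (hy : H.MarkedPt y)
    (hz : H.MarkedPt z) : H.MarkedPt m := by
  by_cases h1 : x = m
  · exact h1 ▸ hx
  by_cases h2 : y = m
  · exact h2 ▸ hy
  by_cases h3 : z = m
  · exact h3 ▸ hz
  left
  have hne : ∀ a b, a ≠ m → b ≠ m → m ∈ H.arc a b →
      connectedComponentIn ({m}ᶜ : Set X) a ≠ connectedComponentIn ({m}ᶜ : Set X) b := by
    intro a b ha hb hab h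
    refine (H.mem_cc_iff ha hb).1 ?_ hab
    rw [h]; exact mem_cc hb
  have hsub : ({connectedComponentIn ({m}ᶜ : Set X) x, connectedComponentIn ({m}ᶜ : Set X) y,
      connectedComponentIn ({m}ᶜ : Set X) z} : Set (Set X)) ⊆ arms m := by
    rintro C (rfl | rfl | rfl)
    · exact ⟨x, h1, rfl⟩
    · exact ⟨y, h2, rfl⟩
    · exact ⟨z, h3, rfl⟩
  have hcard : ({connectedComponentIn ({m}ᶜ : Set X) x, connectedComponentIn ({m}ᶜ : Set X) y,
      connectedComponentIn ({m}ᶜ : Set X) z} : Set (Set X)).ncard = 3 :=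
    ncard_eq_three.2 ⟨_, _, _, hne _ _ h1 h2 hm.1, hne _ _ h1 h3 hm.2.2, hne _ _ h2 h3 hm.2.1, rfl⟩
  rw [IsBranchPt, ← hcard]
  exact ncard_le_ncard hsub (H.arms_finite m)

theorem marked_med {m : X} (h : H.MarkedPt m) :
    ∃ i j k, H.Med (H.f^[i] H.c0) (H.f^[j] H.c0) (H.f^[k] H.c0) m := by
  have := H.t2
  have := H.conn
  have := H.compact
  rcases h with h | ⟨k, rfl⟩
  · obtain ⟨t, ht, htc⟩ := exists_subset_card_eq h
    rw [ncard_eq_three] at htc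
    obtain ⟨A, B, C, hAB, hAC, hBC, rfl⟩ := htc
    have key : ∀ D ∈ arms m, ∃ i, H.f^[i] H.c0 ≠ m ∧
        D = connectedComponentIn ({m}ᶜ : Set X) (H.f^[i] H.c0) := by
      rintro D ⟨y, hy, rfl⟩
      obtain ⟨e, he, hee⟩ := arm_has_endpoint H.arms_finite hy
      obtain ⟨k, rfl⟩ := H.endpoints_on_orbit e hee
      refine ⟨k, ?_, cc_eq he⟩
      intro h'
      rw [h'] at he
      exact notMem_cc _ _ he
    obtain ⟨i, hi, rfl⟩ := key A (ht (by simp))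
    obtain ⟨j, hj, rfl⟩ := key B (ht (by simp))
    obtain ⟨k, hk, rfl⟩ := key C (ht (by simp))
    have hne : ∀ a b, a ≠ m → b ≠ m → connectedComponentIn ({m}ᶜ : Set X) a ≠
        connectedComponentIn ({m}ᶜ : Set X) b → m ∈ H.arc a b := by
      intro a b ha hb hab
      by_contra h'
      exact hab (cc_eq ((H.mem_cc_iff ha hb).2 h'))
    exact ⟨i, j, k, hne _ _ hi hj hAB, hne _ _ hj hk hBC, hne _ _ hi hk hAC⟩
  · exact ⟨k, k, k, H.left_mem _ _, H.left_mem _ _, H.left_mem _ _⟩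

theorem marked_orbit (k : ℕ) : H.MarkedPt (H.f^[k] H.c0) := Or.inr ⟨k, rfl⟩

theorem marked_c0 : H.MarkedPt H.c0 := Or.inr ⟨0, rfl⟩

theorem marked_f_cut (x : X) (k : ℕ) : H.MarkedPt (H.f (H.cut x (H.f^[k] H.c0))) := by
  unfold cut
  split_ifs
  · exact Or.inr ⟨k + 1, Function.iterate_succ_apply' _ _ _⟩
  · exact H.marked_orbit 1

theorem marked_f {m : X} (h : H.MarkedPt m) : H.MarkedPt (H.f m) := by
  obtain ⟨i, j, k, hm⟩ := H.marked_med h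
  have ho : ∀ k, H.MarkedPt (H.f (H.f^[k] H.c0)) := fun k => by
    exact Or.inr ⟨k + 1, Function.iterate_succ_apply' _ _ _⟩
  by_cases h1 : H.c0 ∈ H.arc (H.f^[i] H.c0) (H.f^[j] H.c0)
  · by_cases h2 : H.c0 ∈ H.arc (H.f^[j] H.c0) (H.f^[k] H.c0)
    · by_cases h3 : H.c0 ∈ H.arc (H.f^[i] H.c0) (H.f^[k] H.c0)
      · rw [H.med_none hm h1 h2 h3]; exact H.marked_orbit 1
      · exact H.med_marked (H.med_maj (H.med_rot (H.med_swap hm)) h3).2 (ho _) (ho _)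
          (H.marked_f_cut _ _)
    · exact H.med_marked (H.med_maj (H.med_rot hm) h2).2 (ho _) (ho _) (H.marked_f_cut _ _)
  · exact H.med_marked (H.med_maj hm h1).2 (ho _) (ho _) (H.marked_f_cut _ _)

variable {Y : Type*} [TopologicalSpace Y] (H' : HubbardTree Y)

/-- equal itineraries -/
def SameItin (x : X) (y : Y) : Prop := ∀ n, H.symOf (H.f^[n] x) = H'.symOf (H'.f^[n] y)

theorem same_f {x : X} {y : Y} (h : H.SameItin H' x y) : H.SameItin H' (H.f x) (H'.f y) := by
  intro n
  simpa [Function.iterate_succ_apply] using h (n + 1)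

theorem same_f_cut (h0 : H.SameItin H' H.c0 H'.c0) {x z : X} {x' z' : Y}
    (hx : H.SameItin H' x x') (hz : H.SameItin H' z z') :
    H.SameItin H' (H.f (H.cut x z)) (H'.f (H'.cut x' z')) := by
  apply same_f
  have e1 := hx 0
  have e2 := hz 0
  simp only [Function.iterate_zero, id] at e1 e2
  unfold cut
  rw [e1, e2]
  split_ifs
  · exact hz
  · exact h0

theorem same_sep {x y : X} {x' y' : Y} (hx : H.SameItin H' x x') (hy : H.SameItin H' y y') :
    H.c0 ∈ H.arc x y ↔ H'.c0 ∈ H'.arc x' y' := by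
  have e1 := hx 0
  have e2 := hy 0
  simp only [Function.iterate_zero, id] at e1 e2
  rw [← not_iff_not, sep_iff, sep_iff, e1, e2]

theorem same_med (h0 : H.SameItin H' H.c0 H'.c0) {x y z m : X} {x' y' z' m' : Y}
    (hx : H.SameItin H' x x') (hy : H.SameItin H' y y') (hz : H.SameItin H' z z')
    (hm : H.Med x y z m) (hm' : H'.Med x' y' z' m') : H.SameItin H' m m' := by
  intro n
  induction n generalizing x y z m x' y' z' m' with
  | zero =>
    simp only [Function.iterate_zero, id]
    have ex := hx 0
    have ey := hy 0
    simp only [Function.iterate_zero, id] at ex ey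
    by_cases h1 : H.c0 ∈ H.arc x y
    · have h1' := (same_sep H H' hx hy).1 h1
      by_cases h2 : H.c0 ∈ H.arc y z
      · have h2' := (same_sep H H' hy hz).1 h2
        by_cases h3 : H.c0 ∈ H.arc x z
        · have h3' := (same_sep H H' hx hz).1 h3
          rw [H.med_none hm h1 h2 h3, H'.med_none hm' h1' h2' h3']
          exact h0 0
        · have h3' := mt (same_sep H H' hx hz).2 h3
          rw [(H.med_maj (H.med_rot (H.med_swap hm)) h3).1,
            (H'.med_maj (H'.med_rot (H'.med_swap hm')) h3').1, ex]
      · have h2' := mt (same_sep H H' hy hz).2 h2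
        rw [(H.med_maj (H.med_rot hm) h2).1, (H'.med_maj (H'.med_rot hm') h2').1, ey]
    · have h1' := mt (same_sep H H' hx hy).2 h1
      rw [(H.med_maj hm h1).1, (H'.med_maj hm' h1').1, ex]
  | succ n ih =>
    rw [Function.iterate_succ_apply, Function.iterate_succ_apply]
    by_cases h1 : H.c0 ∈ H.arc x y
    · have h1' := (same_sep H H' hx hy).1 h1
      by_cases h2 : H.c0 ∈ H.arc y z
      · have h2' := (same_sep H H' hy hz).1 h2
        by_cases h3 : H.c0 ∈ H.arc x z
        · have h3' := (same_sep H H' hx hz).1 h3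
          rw [H.med_none hm h1 h2 h3, H'.med_none hm' h1' h2' h3']
          exact same_f H H' h0 n
        · have h3' := mt (same_sep H H' hx hz).2 h3
          exact ih (same_f H H' hx) (same_f H H' hz) (same_f_cut H H' h0 hx hy)
            (H.med_maj (H.med_rot (H.med_swap hm)) h3).2
            (H'.med_maj (H'.med_rot (H'.med_swap hm')) h3').2
      · have h2' := mt (same_sep H H' hy hz).2 h2
        exact ih (same_f H H' hy) (same_f H H' hz) (same_f_cut H H' h0 hy hx)
            (H.med_maj (H.med_rot hm) h2).2 (H'.med_maj (H'.med_rot hm') h2').2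
    · have h1' := mt (same_sep H H' hx hy).2 h1
      exact ih (same_f H H' hx) (same_f H H' hy) (same_f_cut H H' h0 hx hz)
        (H.med_maj hm h1).2 (H'.med_maj hm' h1').2

theorem same_orbit (h0 : H.SameItin H' H.c0 H'.c0) (k : ℕ) :
    H.SameItin H' (H.f^[k] H.c0) (H'.f^[k] H'.c0) := by
  intro n
  rw [← Function.iterate_add_apply, ← Function.iterate_add_apply]
  exact h0 _

theorem same_symm {x : X} {y : Y} (h : H.SameItin H' x y) : H'.SameItin H y x :=
  fun n => (h n).symm

theorem exists_partner (h0 : H.SameItin H' H.c0 H'.c0) {x : X} (hx : H.MarkedPt x) :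
    ∃ y, H'.MarkedPt y ∧ H.SameItin H' x y := by
  obtain ⟨i, j, k, hm⟩ := H.marked_med hx
  obtain ⟨m', hm'⟩ := H'.exists_med (H'.f^[i] H'.c0) (H'.f^[j] H'.c0) (H'.f^[k] H'.c0)
  exact ⟨m', H'.med_marked hm' (H'.marked_orbit _) (H'.marked_orbit _) (H'.marked_orbit _),
    same_med H H' h0 (same_orbit H H' h0 i) (same_orbit H H' h0 j) (same_orbit H H' h0 k) hm hm'⟩

theorem same_arc (h0 : H.SameItin H' H.c0 H'.c0) {x y w : X} {x' y' w' : Y}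
    (mx : H'.MarkedPt x') (my : H'.MarkedPt y') (mw : H'.MarkedPt w')
    (hx : H.SameItin H' x x') (hy : H.SameItin H' y y') (hw : H.SameItin H' w w')
    (h : w ∈ H.arc x y) : w' ∈ H'.arc x' y' := by
  obtain ⟨m', hm'⟩ := H'.exists_med x' y' w'
  have hs := same_med H H' h0 hx hy hw ⟨h, H.right_mem _ _, H.right_mem _ _⟩ hm'
  have : m' = w' := H'.marked_distinct (H'.med_marked hm' mx my mw) mw
    (fun n => (hs n).symm.trans (hw n))
  exact this ▸ hm'.1

theorem same_edge (h0 : H.SameItin H' H.c0 H'.c0) {x y : X} {x' y' : Y}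
    (mx' : H'.MarkedPt x') (my' : H'.MarkedPt y')
    (hx : H.SameItin H' x x') (hy : H.SameItin H' y y') (h : H.IsEdge x y) :
    H'.IsEdge x' y' := by
  obtain ⟨mx, my, hne, hw⟩ := h
  refine ⟨mx', my', ?_, ?_⟩
  · rintro rfl
    exact hne (H.marked_distinct mx my (fun n => (hx n).trans (hy n).symm))
  · intro w' hw' mw'
    obtain ⟨w, mw, hs⟩ := exists_partner H' H (same_symm H H' h0) mw'
    have hs' := same_symm H' H hs
    have := same_arc H' H (same_symm H H' h0) mx my mw (same_symm H H' hx) (same_symm H H' hy)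
      hs hw'
    rcases hw w this mw with rfl | rfl
    · exact Or.inl (H'.marked_distinct mw' mx' (fun n => (hs n).trans (hx n)))
    · exact Or.inr (H'.marked_distinct mw' my' (fun n => (hs n).trans (hy n)))

end HubbardTree

end Helpers3

/-- Corollary 5.20, "Uniqueness of Hubbard Tree".
A Hubbard tree is determined uniquely up to equivalence by its kneading sequence:
any two Hubbard trees with the same (necessarily `*`-periodic or preperiodic)
kneading sequence are equivalent. -/
theorem uniqueness_of_hubbard_tree
    {X Y : Type*} [TopologicalSpace X] [TopologicalSpace Y]
    (H : HubbardTree X) (H' : HubbardTree Y)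
    (hkn : ∀ k : ℕ, 1 ≤ k → H.kneading k = H'.kneading k) :
    H.Equivalent H' := by
  classical
  have h0 : H.SameItin H' H.c0 H'.c0 := by
    intro n
    cases n with
    | zero =>
      simp only [Function.iterate_zero, id]
      rw [H.sym_star.2 rfl, H'.sym_star.2 rfl]
    | succ n =>
      have := hkn (n + 1) (by omega)
      simpa [HubbardTree.kneading, HubbardTree.itin, HubbardTree.c1,
        Function.iterate_succ_apply] using this
  have h0' := HubbardTree.same_symm H H' h0
  have hex : ∀ x : X, ∃ y, H.MarkedPt x → H'.MarkedPt y ∧ H.SameItin H' x y := by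
    intro x
    by_cases hx : H.MarkedPt x
    · obtain ⟨y, hy⟩ := HubbardTree.exists_partner H H' h0 hx
      exact ⟨y, fun _ => hy⟩
    · exact ⟨H'.c0, fun h => absurd h hx⟩
  choose φ hφ using hex
  have uniq : ∀ (x : X) (y : Y), H.MarkedPt x → H'.MarkedPt y → H.SameItin H' x y → φ x = y :=
    fun x y hx hy hs => H'.marked_distinct (hφ x hx).1 hy
      (fun n => ((hφ x hx).2 n).symm.trans (hs n))
  refine ⟨φ, fun x hx => (hφ x hx).1, ?_, ?_, ?_, ?_, ?_⟩
  · intro x x' hx hx' h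
    refine H.marked_distinct hx hx' (fun n => ?_)
    rw [(hφ x hx).2 n, (hφ x' hx').2 n, h]
  · intro y hy
    obtain ⟨x, hx, hs⟩ := HubbardTree.exists_partner H' H h0' hy
    exact ⟨x, hx, uniq x y hx hy (HubbardTree.same_symm H' H hs)⟩
  · exact uniq _ _ H.marked_c0 H'.marked_c0 h0
  · intro x hx
    exact uniq _ _ (H.marked_f hx) (H'.marked_f (hφ x hx).1)
      (HubbardTree.same_f H H' (hφ x hx).2)
  · intro x x' hx hx'
    exact ⟨HubbardTree.same_edge H H' h0 (hφ x hx).1 (hφ x' hx').1 (hφ x hx).2 (hφ x' hx').2,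
      HubbardTree.same_edge H' H h0' hx hx' (HubbardTree.same_symm H H' (hφ x hx).2)
        (HubbardTree.same_symm H H' (hφ x' hx').2)⟩

end HubbardTrees
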